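/- Under the system model, the covariance matrix of the stacked received pilot signal satisfies E[ψ_j ψ_jᴴ] = Ψ_j ⊗ I_N; equivalently, for all pilot times b₁, b₂ ∈ {1,…,B}, the N×N block satisfies E[y_j(b₁) y_j(b₂)ᴴ] = [Ψ_j]_{b₁,b₂} · I_N. -/

import Mathlib

open MeasureTheory ProbabilityTheory Matrix Complex
open scoped ProbabilityTheory Kronecker

/-- Deterministic phase-drift damping matrix
`D_{δ(t)} = diag(e^{−δ(t−1)/2}, …, e^{−δ(t−B)/2})`; the `b`-th diagonal entry
(`b : Fin B`, corresponding to pilot time `b+1`) is `e^{−δ(t−(b+1))/2}`. -/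
noncomputable def Dmat (δ : ℝ) (t B : ℕ) : Matrix (Fin B) (Fin B) ℂ :=
  Matrix.diagonal fun b => (Real.exp (-(δ / 2) * ((t : ℝ) - ((b : ℕ) + 1))) : ℂ)

/-- Deterministic pilot matrix `X_{ℓm}` built from the pilot sequence `xv`:
diagonal entries `|x(b)|²(1+κ²)` and off-diagonal entries `x(b₁)x(b₂)* e^{−δ|b₁−b₂|/2}`. -/
noncomputable def Xmat {B : ℕ} (κ δ : ℝ) (xv : Fin B → ℂ) : Matrix (Fin B) (Fin B) ℂ :=
  Matrix.of fun b₁ b₂ =>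
    if b₁ = b₂ then ((Complex.normSq (xv b₁) * (1 + κ ^ 2) : ℝ) : ℂ)
    else xv b₁ * star (xv b₂) * (Real.exp (-(δ / 2) * |((b₁ : ℕ) : ℝ) - ((b₂ : ℕ) : ℝ)|) : ℂ)

/-- Deterministic matrix `Ψ_j = Σ_ℓ Σ_m λ_{jℓm} X_{ℓm} + σ²ξ I_B`. -/
noncomputable def PsiMat {B L K : ℕ} (lam : Fin L → Fin K → ℝ) (σ2 ξ κ δ : ℝ)
    (x : Fin L → Fin K → Fin B → ℂ) : Matrix (Fin B) (Fin B) ℂ :=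
  (∑ l, ∑ m, ((lam l m : ℝ) : ℂ) • Xmat κ δ (x l m)) + ((σ2 * ξ : ℝ) : ℂ) • 1

/-- The uplink massive MIMO system model at base station `j`, on the probability space `Ω`,
with `N` antennas, pilot length `B`, `L` cells, `K` users per cell, channel attenuations
`lam l k = λ_{jlk}`, noise variance `σ2 = σ²`, noise amplification `ξ`, distortion parameter
`κ`, phase-drift variance `δ`, and deterministic pilot sequences `x l k : Fin B → ℂ`
(pilot time `b+1` for `b : Fin B`).  All underlying real random sources are mutually
independent: channel real/imaginary parts `hRe, hIm ~ N(0, λ_{jlk}/2)` (so the channel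
coefficients are `CN(0, λ_{jlk})`), phase-drift increments `dphi n u ~ N(0, δ)` (`u ≥ 1`),
distortion real/imaginary parts `zRe, zIm ~ N(0, 1/2)` (so `z ~ CN(0,1)`), and receiver-noise
real/imaginary parts `etaRe, etaIm ~ N(0, σ²ξ/2)` (so `η ~ CN(0, σ²ξ)`). -/
structure MIMOModel (Ω : Type*) [MeasureSpace Ω] (N B L K : ℕ)
    (lam : Fin L → Fin K → ℝ) (σ2 ξ κ δ : ℝ) (x : Fin L → Fin K → Fin B → ℂ) where
  hRe : Fin L → Fin K → Fin N → Ω → ℝ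
  hIm : Fin L → Fin K → Fin N → Ω → ℝ
  dphi : Fin N → ℕ → Ω → ℝ
  zRe : Fin N → ℕ → Ω → ℝ
  zIm : Fin N → ℕ → Ω → ℝ
  etaRe : Fin N → ℕ → Ω → ℝ
  etaIm : Fin N → ℕ → Ω → ℝ
  meas_hRe : ∀ l k n, Measurable (hRe l k n)
  meas_hIm : ∀ l k n, Measurable (hIm l k n)
  meas_dphi : ∀ n u, Measurable (dphi n u)
  meas_zRe : ∀ n s, Measurable (zRe n s)
  meas_zIm : ∀ n s, Measurable (zIm n s)
  meas_etaRe : ∀ n s, Measurable (etaRe n s)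
  meas_etaIm : ∀ n s, Measurable (etaIm n s)
  law_hRe : ∀ l k n, Measure.map (hRe l k n) ℙ = gaussianReal 0 (Real.toNNReal (lam l k / 2))
  law_hIm : ∀ l k n, Measure.map (hIm l k n) ℙ = gaussianReal 0 (Real.toNNReal (lam l k / 2))
  law_dphi : ∀ n u, Measure.map (dphi n u) ℙ = gaussianReal 0 (Real.toNNReal δ)
  law_zRe : ∀ n s, Measure.map (zRe n s) ℙ = gaussianReal 0 (Real.toNNReal (1 / 2))
  law_zIm : ∀ n s, Measure.map (zIm n s) ℙ = gaussianReal 0 (Real.toNNReal (1 / 2))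
  law_etaRe : ∀ n s, Measure.map (etaRe n s) ℙ = gaussianReal 0 (Real.toNNReal (σ2 * ξ / 2))
  law_etaIm : ∀ n s, Measure.map (etaIm n s) ℙ = gaussianReal 0 (Real.toNNReal (σ2 * ξ / 2))
  indep : iIndepFun (m := fun _ => (inferInstance : MeasurableSpace ℝ))
    (fun i : (Fin L × Fin K × Fin N × Bool) ⊕ (Fin N × ℕ) ⊕ (Fin N × ℕ × Bool) ⊕
        (Fin N × ℕ × Bool) =>
      match i with
      | Sum.inl (l, k, n, false) => hRe l k n
      | Sum.inl (l, k, n, true) => hIm l k n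
      | Sum.inr (Sum.inl (n, u)) => dphi n u
      | Sum.inr (Sum.inr (Sum.inl (n, s, false))) => zRe n s
      | Sum.inr (Sum.inr (Sum.inl (n, s, true))) => zIm n s
      | Sum.inr (Sum.inr (Sum.inr (n, s, false))) => etaRe n s
      | Sum.inr (Sum.inr (Sum.inr (n, s, true))) => etaIm n s) (ℙ : Measure Ω)

namespace MIMOModel

variable {Ω : Type*} [MeasureSpace Ω] {N B L K : ℕ} {lam : Fin L → Fin K → ℝ}
  {σ2 ξ κ δ : ℝ} {x : Fin L → Fin K → Fin B → ℂ}

variable (M : MIMOModel Ω N B L K lam σ2 ξ κ δ x)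

/-- Accumulated phase drift `φ_{jn}(s) = Σ_{u=1}^{s} Δ_{jn}(u)`. -/
noncomputable def phase (n : Fin N) (s : ℕ) (ω : Ω) : ℝ :=
  ∑ u ∈ Finset.Icc 1 s, M.dphi n u ω

/-- Channel coefficient `h_{jlk}^{(n)} ~ CN(0, λ_{jlk})`. -/
noncomputable def ch (l : Fin L) (k : Fin K) (n : Fin N) (ω : Ω) : ℂ :=
  Complex.mk (M.hRe l k n ω) (M.hIm l k n ω)

/-- Distortion variable `z_{jn}(s) ~ CN(0,1)`. -/
noncomputable def z (n : Fin N) (s : ℕ) (ω : Ω) : ℂ :=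
  Complex.mk (M.zRe n s ω) (M.zIm n s ω)

/-- Receiver noise `η_j^{(n)}(s) ~ CN(0, σ²ξ)`. -/
noncomputable def eta (n : Fin N) (s : ℕ) (ω : Ω) : ℂ :=
  Complex.mk (M.etaRe n s ω) (M.etaIm n s ω)

/-- Received pilot signal at antenna `n`, pilot time `b+1` (for `b : Fin B`):
`y_j^{(n)}(b) = e^{iφ_{jn}(b)} Σ_l Σ_m h_{jlm}^{(n)} x_{lm}(b)
  + κ (Σ_l Σ_m |x_{lm}(b)|² |h_{jlm}^{(n)}|²)^{1/2} z_{jn}(b) + η_j^{(n)}(b)`. -/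
noncomputable def y (n : Fin N) (b : Fin B) (ω : Ω) : ℂ :=
  Complex.exp (Complex.I * ((M.phase n ((b : ℕ) + 1) ω : ℝ) : ℂ))
      * ∑ l, ∑ m, M.ch l m n ω * x l m b
    + (κ : ℂ) * ((Real.sqrt (∑ l, ∑ m, Complex.normSq (x l m b)
        * Complex.normSq (M.ch l m n ω)) : ℝ) : ℂ) * M.z n ((b : ℕ) + 1) ω
    + M.eta n ((b : ℕ) + 1) ω

/-- Effective channel at time `t`: `h_{jlk}(t)` has `n`-th entry `e^{iφ_{jn}(t)} h_{jlk}^{(n)}`. -/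
noncomputable def hEff (l : Fin L) (k : Fin K) (t : ℕ) (n : Fin N) (ω : Ω) : ℂ :=
  Complex.exp (Complex.I * ((M.phase n t ω : ℝ) : ℂ)) * M.ch l k n ω

/-- LMMSE channel estimate `ĥ_{jlk}(t) = λ_{jlk} Σ_b c_b y_j(b)` with
`(c_1, …, c_B) = x̃_{lk}ᴴ D_{δ(t)} Ψ_j⁻¹`. -/
noncomputable def hHat (l : Fin L) (k : Fin K) (t : ℕ) (n : Fin N) (ω : Ω) : ℂ :=
  ((lam l k : ℝ) : ℂ) * ∑ b,
    Matrix.vecMul (star (x l k)) (Dmat δ t B * (PsiMat lam σ2 ξ κ δ x)⁻¹) b * M.y n b ω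

/-- Data-phase distortion noise `υ_j(t)` with `n`-th entry
`κ (Σ_l Σ_m p_{lm} |h_{jlm}^{(n)}|²)^{1/2} z_{jn}(t)`. -/
noncomputable def ups (p : Fin L → Fin K → ℝ) (t : ℕ) (n : Fin N) (ω : Ω) : ℂ :=
  (κ : ℂ) * ((Real.sqrt (∑ l, ∑ m, p l m * Complex.normSq (M.ch l m n ω)) : ℝ) : ℂ)
    * M.z n t ω

/-- The uplink SINR of user `k` in cell `j` at time `t` with the MRC filter
`v_{jk}(t) = ĥ_{jjk}(t)`. -/
noncomputable def SINR (p : Fin L → Fin K → ℝ) (j : Fin L) (k : Fin K) (t : ℕ) : ℝ :=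
  p j k * Complex.normSq (∫ ω, ∑ n, star (M.hHat j k t n ω) * M.hEff j k t n ω) /
    ((∑ l, ∑ m, p l m * ∫ ω, Complex.normSq (∑ n, star (M.hHat j k t n ω) * M.hEff l m t n ω))
      - p j k * Complex.normSq (∫ ω, ∑ n, star (M.hHat j k t n ω) * M.hEff j k t n ω)
      + (∫ ω, Complex.normSq (∑ n, star (M.hHat j k t n ω) * M.ups p t n ω))
      + σ2 * ξ * ∫ ω, ∑ n, Complex.normSq (M.hHat j k t n ω))

end MIMOModel

/-!
The received pilot is a sum of three parts that are pairwise orthogonal in `L²`: the phase-rotated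
pilot mix, the distortion and the receiver noise. Distortion is a random amplitude times a centred
`z` independent of everything else, and the noise is centred and independent of the rest, so all
mixed moments vanish; both are white, hence contribute only for equal antennas and equal times.
In the pilot mix the phase drift is independent of the channels, so its second moment factors:
the channels contribute `∑ λ x(b₁) x(b₂)*` for equal antennas, and the phase increment between the
two times is `N(0, |b₁ - b₂| δ)`, whose characteristic function at `1` is `e^{-δ|b₁ - b₂|/2}`.
-/

section CrossMoment

variable {Ω 𝕜 : Type*} {mΩ : MeasurableSpace Ω} {μ : Measure Ω} [RCLike 𝕜]
  {X X' Y Y' Z : Ω → 𝕜}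

/-- The cross moment `E[X Y*]` of two scalar random variables; it is their covariance as soon as
one of them is centred. -/
noncomputable def crossMoment (X Y : Ω → 𝕜) (μ : Measure Ω) : 𝕜 :=
  ∫ ω, X ω * star (Y ω) ∂μ

lemma star_crossMoment (X Y : Ω → 𝕜) (μ : Measure Ω) :
    star (crossMoment X Y μ) = crossMoment Y X μ := by
  calc star (crossMoment X Y μ) = ∫ ω, star (X ω * star (Y ω)) ∂μ := integral_conj.symm
    _ = crossMoment Y X μ := by simp only [star_mul, star_star, crossMoment]

lemma crossMoment_self (X : Ω → 𝕜) (μ : Measure Ω) :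
    crossMoment X X μ = ((∫ ω, ‖X ω‖ ^ 2 ∂μ : ℝ) : 𝕜) := by
  rw [crossMoment, ← integral_ofReal]
  exact integral_congr_ae (.of_forall fun ω => by simpa using RCLike.mul_conj (X ω))

lemma integrable_mul_star (hX : MemLp X 2 μ) (hY : MemLp Y 2 μ) :
    Integrable (fun ω => X ω * star (Y ω)) μ :=
  hX.integrable_mul hY.star

lemma crossMoment_sum_mul {ι ι' : Type*} {s : Finset ι} {t : Finset ι'}
    {X : ι → Ω → 𝕜} {Y : ι' → Ω → 𝕜} (a : ι → 𝕜) (b : ι' → 𝕜)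
    (hX : ∀ i ∈ s, MemLp (X i) 2 μ) (hY : ∀ j ∈ t, MemLp (Y j) 2 μ) :
    crossMoment (fun ω => ∑ i ∈ s, X i ω * a i) (fun ω => ∑ j ∈ t, Y j ω * b j) μ =
      ∑ i ∈ s, ∑ j ∈ t, crossMoment (X i) (Y j) μ * (a i * star (b j)) := by
  have expand (ω : Ω) : (∑ i ∈ s, X i ω * a i) * star (∑ j ∈ t, Y j ω * b j) =
      ∑ i ∈ s, ∑ j ∈ t, X i ω * star (Y j ω) * (a i * star (b j)) := by
    simp only [star_sum, star_mul', Finset.sum_mul_sum, mul_mul_mul_comm]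
  have integrable_term (i) (hi : i ∈ s) (j) (hj : j ∈ t) :
      Integrable (fun ω => X i ω * star (Y j ω) * (a i * star (b j))) μ :=
    (integrable_mul_star (hX i hi) (hY j hj)).mul_const _
  simp only [crossMoment, expand, ← integral_mul_const]
  rw [integral_finsetSum _ fun i hi => integrable_finsetSum _ (integrable_term i hi)]
  exact Finset.sum_congr rfl fun i hi => integral_finsetSum _ (integrable_term i hi)

lemma crossMoment_add_left (hX : MemLp X 2 μ) (hY : MemLp Y 2 μ) (hZ : MemLp Z 2 μ) :
    crossMoment (X + Y) Z μ = crossMoment X Z μ + crossMoment Y Z μ := by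
  simp only [crossMoment, Pi.add_apply, add_mul]
  exact integral_add (integrable_mul_star hX hZ) (integrable_mul_star hY hZ)

lemma crossMoment_add_right (hX : MemLp X 2 μ) (hY : MemLp Y 2 μ) (hZ : MemLp Z 2 μ) :
    crossMoment X (Y + Z) μ = crossMoment X Y μ + crossMoment X Z μ := by
  rw [← star_crossMoment, crossMoment_add_left hY hZ hX, star_add, star_crossMoment,
    star_crossMoment]

lemma crossMoment_add_add_of_orthogonal (hX : MemLp X 2 μ) (hY : MemLp Y 2 μ)
    (hX' : MemLp X' 2 μ) (hY' : MemLp Y' 2 μ)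
    (hYX' : crossMoment Y X' μ = 0) (hY'X : crossMoment Y' X μ = 0) :
    crossMoment (X + Y) (X' + Y') μ = crossMoment X X' μ + crossMoment Y Y' μ := by
  have hXY' : crossMoment X Y' μ = 0 := by rw [← star_crossMoment, hY'X, star_zero]
  rw [crossMoment_add_left hX hY (hX'.add hY'), crossMoment_add_right hX hX' hY',
    crossMoment_add_right hY hX' hY', hXY', hYX', add_zero, zero_add]

lemma crossMoment_mul_eq_zero_of_indepFun (h : IndepFun Y (fun ω => X ω * star (Z ω)) μ)
    (hX : AEStronglyMeasurable X μ) (hY : AEStronglyMeasurable Y μ)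
    (hZ : AEStronglyMeasurable Z μ) (hY0 : ∫ ω, Y ω ∂μ = 0) :
    crossMoment (X * Y) Z μ = 0 := by
  calc crossMoment (X * Y) Z μ = ∫ ω, Y ω * (X ω * star (Z ω)) ∂μ := by
        simp only [crossMoment, Pi.mul_apply, mul_left_comm, mul_assoc]
    _ = (∫ ω, Y ω ∂μ) * ∫ ω, X ω * star (Z ω) ∂μ :=
        h.integral_fun_mul_eq_mul_integral hY (hX.mul hZ.star)
    _ = 0 := by rw [hY0, zero_mul]

lemma crossMoment_eq_zero_of_indepFun (h : IndepFun X Y μ) (hX : AEStronglyMeasurable X μ)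
    (hY : AEStronglyMeasurable Y μ) (hX0 : ∫ ω, X ω ∂μ = 0) : crossMoment X Y μ = 0 := by
  have h_star : IndepFun X (fun ω => star (Y ω)) μ :=
    h.comp measurable_id continuous_star.measurable
  rw [crossMoment, h_star.integral_fun_mul_eq_mul_integral hX hY.star, hX0, zero_mul]

lemma crossMoment_mul_mul
    (h : IndepFun (fun ω => X ω * star (X' ω)) (fun ω => Y ω * star (Y' ω)) μ)
    (hX : AEStronglyMeasurable X μ) (hX' : AEStronglyMeasurable X' μ)
    (hY : AEStronglyMeasurable Y μ) (hY' : AEStronglyMeasurable Y' μ) :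
    crossMoment (X * Y) (X' * Y') μ = crossMoment X X' μ * crossMoment Y Y' μ := by
  rw [crossMoment, crossMoment, crossMoment,
    ← h.integral_fun_mul_eq_mul_integral (hX.mul hX'.star) (hY.mul hY'.star)]
  simp only [Pi.mul_apply, star_mul', mul_mul_mul_comm]

lemma memLp_two_mul_of_indepFun (h : IndepFun X Y μ) (hX : MemLp X 2 μ) (hY : MemLp Y 2 μ) :
    MemLp (X * Y) 2 μ := by
  have hXY : AEStronglyMeasurable (X * Y) μ := hX.1.mul hY.1
  rw [memLp_two_iff_integrable_sq_norm hXY]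
  have norm_sq_meas : Measurable fun w : 𝕜 => ‖w‖ ^ 2 := by fun_prop
  simpa [Function.comp_def, Pi.mul_def, mul_pow] using
    (h.comp norm_sq_meas norm_sq_meas).integrable_mul
      ((memLp_two_iff_integrable_sq_norm hX.1).1 hX)
      ((memLp_two_iff_integrable_sq_norm hY.1).1 hY)

end CrossMoment

section Gaussian

variable {Ω : Type*} {mΩ : MeasurableSpace Ω} {μ : Measure Ω}

lemma integral_sq_of_hasLaw_gaussianReal {X : Ω → ℝ} {v : NNReal}
    (hX : HasLaw X (gaussianReal 0 v) μ) : ∫ ω, X ω ^ 2 ∂μ = v := by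
  rw [← variance_of_integral_eq_zero hX.aemeasurable (by simp [hX.integral_eq]), hX.variance_eq,
    variance_id_gaussianReal]

lemma integral_exp_I_mul_of_hasLaw_gaussianReal {X : Ω → ℝ} {m : ℝ} {v : NNReal}
    (hX : HasLaw X (gaussianReal m v) μ) :
    ∫ ω, exp (I * (X ω : ℂ)) ∂μ = exp (m * I - v / 2) := by
  have h := charFun_gaussianReal (μ := m) (v := v) 1
  rw [charFun_apply_real, ← hX.integral_comp (by fun_prop)] at h
  simpa [Function.comp_def, mul_comm I] using h

lemma hasLaw_sum_gaussianReal {ι : Type*} {X : ι → Ω → ℝ} {m : ι → ℝ} {v : ι → NNReal}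
    (s : Finset ι) (hX : ∀ i, HasLaw (X i) (gaussianReal (m i) (v i)) μ) (h : iIndepFun X μ) :
    HasLaw (fun ω => ∑ i ∈ s, X i ω) (gaussianReal (∑ i ∈ s, m i) (∑ i ∈ s, v i)) μ where
  aemeasurable := Finset.aemeasurable_fun_sum s fun i _ => (hX i).aemeasurable
  map_eq := by
    have := h.isProbabilityMeasure
    have := Measure.isProbabilityMeasure_map (μ := μ)
      (Finset.aemeasurable_fun_sum s fun i _ => (hX i).aemeasurable)
    apply Measure.ext_of_charFun
    rw [(h.restrict s).charFun_map_fun_finsetSum_eq_prod fun i _ => (hX i).aemeasurable]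
    ext t
    simp only [Finset.prod_apply, (hX _).map_eq, charFun_gaussianReal, ← exp_sum]
    push_cast
    simp only [Finset.sum_sub_distrib, Finset.mul_sum, Finset.sum_mul, Finset.sum_div]

/-- `X` is circularly symmetric complex Gaussian, `X ~ CN(0, v)`: its real and imaginary parts are
independent `N(0, v / 2)` variables. -/
structure HasComplexGaussianLaw (X : Ω → ℂ) (v : NNReal) (μ : Measure Ω) : Prop where
  re : HasLaw (fun ω => (X ω).re) (gaussianReal 0 (v / 2)) μ
  im : HasLaw (fun ω => (X ω).im) (gaussianReal 0 (v / 2)) μ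
  indepFun_re_im : IndepFun (fun ω => (X ω).re) (fun ω => (X ω).im) μ

namespace HasComplexGaussianLaw

variable {X : Ω → ℂ} {v : NNReal}

lemma memLp_two (hX : HasComplexGaussianLaw X v μ) : MemLp X 2 μ :=
  memLp_re_im_iff.1 ⟨hX.re.hasGaussianLaw.memLp_two, hX.im.hasGaussianLaw.memLp_two⟩

lemma integral_eq_zero (hX : HasComplexGaussianLaw X v μ) : ∫ ω, X ω ∂μ = 0 := by
  have := hX.re.isProbabilityMeasure
  rw [← integral_re_add_im (hX.memLp_two.integrable one_le_two)]
  simp [hX.re.integral_eq, hX.im.integral_eq]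

lemma integral_norm_sq (hX : HasComplexGaussianLaw X v μ) : ∫ ω, ‖X ω‖ ^ 2 ∂μ = v := by
  simp only [Complex.sq_norm, normSq_apply, ← sq]
  rw [integral_add hX.re.hasGaussianLaw.memLp_two.integrable_sq
      hX.im.hasGaussianLaw.memLp_two.integrable_sq,
    integral_sq_of_hasLaw_gaussianReal hX.re, integral_sq_of_hasLaw_gaussianReal hX.im,
    ← NNReal.coe_add, add_halves]

lemma crossMoment_self (hX : HasComplexGaussianLaw X v μ) : crossMoment X X μ = (v : ℝ) := by
  rw [_root_.crossMoment_self, hX.integral_norm_sq]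
  rfl

end HasComplexGaussianLaw

lemma crossMoment_of_pairwise_indepFun {α : Type*} [DecidableEq α] {X : α → Ω → ℂ}
    {v : α → NNReal} (hX : ∀ i, HasComplexGaussianLaw (X i) (v i) μ)
    (h : Pairwise fun i j => IndepFun (X i) (X j) μ) (i j : α) :
    crossMoment (X i) (X j) μ = if i = j then ((v i : ℝ) : ℂ) else 0 := by
  split_ifs with hij
  · rw [← hij, (hX i).crossMoment_self]
  · exact crossMoment_eq_zero_of_indepFun (h hij) (hX i).memLp_two.1 (hX j).memLp_two.1
      (hX i).integral_eq_zero

lemma hasComplexGaussianLaw_mk {a b : Ω → ℝ} {v : ℝ} (ha : Measurable a) (hb : Measurable b)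
    (hlaw_a : μ.map a = gaussianReal 0 (v / 2).toNNReal)
    (hlaw_b : μ.map b = gaussianReal 0 (v / 2).toNNReal) (hab : IndepFun a b μ) :
    HasComplexGaussianLaw (fun ω => ⟨a ω, b ω⟩) v.toNNReal μ := by
  rw [Real.toNNReal_div' zero_le_two, Real.toNNReal_ofNat] at hlaw_a hlaw_b
  exact ⟨⟨ha.aemeasurable, hlaw_a⟩, ⟨hb.aemeasurable, hlaw_b⟩, hab⟩

end Gaussian

section Independence

lemma measurable_complex_mk {Ω : Type*} {_ : MeasurableSpace Ω} {a b : Ω → ℝ}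
    (ha : Measurable a) (hb : Measurable b) : Measurable fun ω => (⟨a ω, b ω⟩ : ℂ) :=
  measurableEquivRealProd.symm.measurable.comp (ha.prodMk hb)

lemma measurable_mul_star {Ω : Type*} {_ : MeasurableSpace Ω} {f g : Ω → ℂ} (hf : Measurable f)
    (hg : Measurable g) : Measurable fun ω => f ω * star (g ω) :=
  hf.mul (continuous_star.measurable.comp hg)

variable {Ω ι : Type*} {mΩ : MeasurableSpace Ω} {μ : Measure Ω}

lemma indepFun_complex_mk {X : ι → Ω → ℝ} (h : iIndepFun X μ) (hX : ∀ i, Measurable (X i))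
    {i j k l : ι} (hik : i ≠ k) (hil : i ≠ l) (hjk : j ≠ k) (hjl : j ≠ l) :
    IndepFun (fun ω => (⟨X i ω, X j ω⟩ : ℂ)) (fun ω => (⟨X k ω, X l ω⟩ : ℂ)) μ :=
  (h.indepFun_prodMk_prodMk hX i j k l hik hil hjk hjl).comp
    measurableEquivRealProd.symm.measurable measurableEquivRealProd.symm.measurable

variable {β : ι → Type*} [∀ i, MeasurableSpace (β i)] {X : ∀ i, Ω → β i} {S T : Set ι}

/-- The σ-algebra generated by the variables `X i` with `i ∈ S`. -/
abbrev generatedSigma (X : ∀ i, Ω → β i) (S : Set ι) : MeasurableSpace Ω :=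
  ⨆ i ∈ S, MeasurableSpace.comap (X i) inferInstance

lemma measurable_generatedSigma {i : ι} (hi : i ∈ S) : Measurable[generatedSigma X S] (X i) :=
  Measurable.of_comap_le (le_iSup₂ (f := fun i (_ : i ∈ S) =>
    MeasurableSpace.comap (X i) inferInstance) i hi)

lemma generatedSigma_le (hX : ∀ i, Measurable (X i)) : generatedSigma X S ≤ mΩ :=
  iSup₂_le fun i _ => (hX i).comap_le

lemma indepFun_of_measurable_generatedSigma (h : iIndepFun X μ) (hX : ∀ i, Measurable (X i))
    (hST : Disjoint S T) {γ γ' : Type*} [MeasurableSpace γ] [MeasurableSpace γ']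
    {f : Ω → γ} {g : Ω → γ'} (hf : Measurable[generatedSigma X S] f)
    (hg : Measurable[generatedSigma X T] g) : IndepFun f g μ :=
  indep_of_indep_of_le (indep_iSup_of_disjoint (fun i => (hX i).comap_le) h hST)
    hf.comap_le hg.comap_le

end Independence

section PilotMatrices

variable {B L K : ℕ} (κ δ : ℝ)

lemma Xmat_apply (xv : Fin B → ℂ) (b₁ b₂ : Fin B) :
    Xmat κ δ xv b₁ b₂ =
      Real.exp (-(δ / 2) * |((b₁ : ℕ) : ℝ) - ((b₂ : ℕ) : ℝ)|) * (xv b₁ * star (xv b₂)) +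
        if b₁ = b₂ then (κ : ℂ) ^ 2 * normSq (xv b₁) else 0 := by
  rw [Xmat, of_apply]
  split_ifs with h
  · subst h
    rw [star_def, mul_conj]
    simp
    ring
  · rw [add_zero, mul_comm]

lemma PsiMat_apply (lam : Fin L → Fin K → ℝ) (σ2 ξ : ℝ) (x : Fin L → Fin K → Fin B → ℂ)
    (b₁ b₂ : Fin B) :
    PsiMat lam σ2 ξ κ δ x b₁ b₂ =
      Real.exp (-(δ / 2) * |((b₁ : ℕ) : ℝ) - ((b₂ : ℕ) : ℝ)|) *
          ∑ l, ∑ m, lam l m * (x l m b₁ * star (x l m b₂)) +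
        (if b₁ = b₂ then (κ : ℂ) ^ 2 * ∑ l, ∑ m, (lam l m : ℂ) * normSq (x l m b₁) else 0) +
        if b₁ = b₂ then ((σ2 * ξ : ℝ) : ℂ) else 0 := by
  simp only [PsiMat, Matrix.add_apply, Matrix.sum_apply, Matrix.smul_apply, Xmat_apply,
    smul_eq_mul, mul_add, Finset.sum_add_distrib, one_apply, mul_ite, mul_one, mul_zero,
    Finset.mul_sum]
  split_ifs <;> simp only [mul_left_comm, Finset.sum_const_zero]

end PilotMatrices

namespace MIMOModel

/-- The four mutually independent families of randomness in the system model. -/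
inductive SourceKind
  | channel
  | phaseDrift
  | distortion
  | noise

/-- Index set of the real random sources listed in `MIMOModel.indep`; a final `Bool` selects the
real (`false`) or imaginary (`true`) part. -/
abbrev SourceIndex (N L K : ℕ) : Type :=
  (Fin L × Fin K × Fin N × Bool) ⊕ (Fin N × ℕ) ⊕ (Fin N × ℕ × Bool) ⊕ (Fin N × ℕ × Bool)

/-- The family to which a real random source belongs. -/
def sourceKind {N L K : ℕ} : SourceIndex N L K → SourceKind
  | Sum.inl _ => .channel
  | Sum.inr (Sum.inl _) => .phaseDrift
  | Sum.inr (Sum.inr (Sum.inl _)) => .distortion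
  | Sum.inr (Sum.inr (Sum.inr _)) => .noise

variable {Ω : Type*} [MeasureSpace Ω] {N B L K : ℕ} {lam : Fin L → Fin K → ℝ}
  {σ2 ξ κ δ : ℝ} {x : Fin L → Fin K → Fin B → ℂ}

variable (M : MIMOModel Ω N B L K lam σ2 ξ κ δ x)

/-- The real random sources of the model as a single family. -/
def source : SourceIndex N L K → Ω → ℝ
  | Sum.inl (l, k, n, false) => M.hRe l k n
  | Sum.inl (l, k, n, true) => M.hIm l k n
  | Sum.inr (Sum.inl (n, u)) => M.dphi n u
  | Sum.inr (Sum.inr (Sum.inl (n, s, false))) => M.zRe n s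
  | Sum.inr (Sum.inr (Sum.inl (n, s, true))) => M.zIm n s
  | Sum.inr (Sum.inr (Sum.inr (n, s, false))) => M.etaRe n s
  | Sum.inr (Sum.inr (Sum.inr (n, s, true))) => M.etaIm n s

lemma iIndepFun_source : iIndepFun M.source ℙ := by
  convert M.indep using 2 with i
  rcases i with ⟨l, k, n, _ | _⟩ | ⟨n, u⟩ | ⟨n, s, _ | _⟩ | ⟨n, s, _ | _⟩ <;> rfl

lemma measurable_source (i : SourceIndex N L K) : Measurable (M.source i) := by
  rcases i with ⟨l, k, n, _ | _⟩ | ⟨n, u⟩ | ⟨n, s, _ | _⟩ | ⟨n, s, _ | _⟩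
  exacts [M.meas_hRe l k n, M.meas_hIm l k n, M.meas_dphi n u, M.meas_zRe n s, M.meas_zIm n s,
    M.meas_etaRe n s, M.meas_etaIm n s]

section Measurability

/-- The σ-algebra generated by all sources whose kind lies in `A`. -/
abbrev sigmaOf (A : Set SourceKind) : MeasurableSpace Ω :=
  generatedSigma M.source (sourceKind ⁻¹' A)

variable {M} {A A' : Set SourceKind}

lemma sigmaOf_le : M.sigmaOf A ≤ MeasureSpace.toMeasurableSpace :=
  generatedSigma_le M.measurable_source

lemma indepFun_of_disjoint (hA : Disjoint A A') {f g : Ω → ℂ}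
    (hf : Measurable[M.sigmaOf A] f) (hg : Measurable[M.sigmaOf A'] g) : IndepFun f g ℙ :=
  indepFun_of_measurable_generatedSigma M.iIndepFun_source M.measurable_source
    (hA.preimage sourceKind) hf hg

lemma aestronglyMeasurable_of_sigmaOf {f : Ω → ℂ} (hf : Measurable[M.sigmaOf A] f) :
    AEStronglyMeasurable f ℙ :=
  (hf.mono sigmaOf_le le_rfl).aestronglyMeasurable

lemma measurable_ch (hA : .channel ∈ A) (l : Fin L) (k : Fin K) (n : Fin N) :
    Measurable[M.sigmaOf A] (M.ch l k n) :=
  measurable_complex_mk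
    (measurable_generatedSigma (X := M.source) (i := Sum.inl (l, k, n, false)) hA)
    (measurable_generatedSigma (X := M.source) (i := Sum.inl (l, k, n, true)) hA)

lemma measurable_z (hA : .distortion ∈ A) (n : Fin N) (s : ℕ) :
    Measurable[M.sigmaOf A] (M.z n s) :=
  measurable_complex_mk
    (measurable_generatedSigma (X := M.source) (i := Sum.inr (.inr (.inl (n, s, false)))) hA)
    (measurable_generatedSigma (X := M.source) (i := Sum.inr (.inr (.inl (n, s, true)))) hA)

lemma measurable_eta (hA : .noise ∈ A) (n : Fin N) (s : ℕ) :
    Measurable[M.sigmaOf A] (M.eta n s) :=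
  measurable_complex_mk
    (measurable_generatedSigma (X := M.source) (i := Sum.inr (.inr (.inr (n, s, false)))) hA)
    (measurable_generatedSigma (X := M.source) (i := Sum.inr (.inr (.inr (n, s, true)))) hA)

lemma measurable_phase (hA : .phaseDrift ∈ A) (n : Fin N) (s : ℕ) :
    Measurable[M.sigmaOf A] (M.phase n s) :=
  Finset.measurable_fun_sum _ fun u _ =>
    measurable_generatedSigma (X := M.source) (i := Sum.inr (.inl (n, u))) hA

end Measurability

section GaussianFamilies

lemma hasComplexGaussianLaw_ch (l : Fin L) (k : Fin K) (n : Fin N) :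
    HasComplexGaussianLaw (M.ch l k n) (lam l k).toNNReal ℙ :=
  hasComplexGaussianLaw_mk (M.meas_hRe l k n) (M.meas_hIm l k n) (M.law_hRe l k n)
    (M.law_hIm l k n) (M.iIndepFun_source.indepFun
      (i := Sum.inl (l, k, n, false)) (j := Sum.inl (l, k, n, true)) (by simp))

lemma hasComplexGaussianLaw_z (n : Fin N) (s : ℕ) : HasComplexGaussianLaw (M.z n s) 1 ℙ := by
  rw [← Real.toNNReal_one]
  exact hasComplexGaussianLaw_mk (M.meas_zRe n s) (M.meas_zIm n s) (M.law_zRe n s) (M.law_zIm n s)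
    (M.iIndepFun_source.indepFun (i := Sum.inr (.inr (.inl (n, s, false))))
      (j := Sum.inr (.inr (.inl (n, s, true)))) (by simp))

lemma hasComplexGaussianLaw_eta (n : Fin N) (s : ℕ) :
    HasComplexGaussianLaw (M.eta n s) (σ2 * ξ).toNNReal ℙ :=
  hasComplexGaussianLaw_mk (M.meas_etaRe n s) (M.meas_etaIm n s) (M.law_etaRe n s)
    (M.law_etaIm n s) (M.iIndepFun_source.indepFun (i := Sum.inr (.inr (.inr (n, s, false))))
      (j := Sum.inr (.inr (.inr (n, s, true)))) (by simp))

lemma crossMoment_ch (hlam : ∀ l k, 0 ≤ lam l k) (p q : Fin L × Fin K) (n₁ n₂ : Fin N) :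
    crossMoment (M.ch p.1 p.2 n₁) (M.ch q.1 q.2 n₂) ℙ =
      if p = q ∧ n₁ = n₂ then (lam p.1 p.2 : ℂ) else 0 := by
  have h_indep : Pairwise fun i j : (Fin L × Fin K) × Fin N =>
      IndepFun (M.ch i.1.1 i.1.2 i.2) (M.ch j.1.1 j.1.2 j.2) ℙ := by
    rintro ⟨⟨l, k⟩, n⟩ ⟨⟨l', k'⟩, n'⟩ hij
    refine indepFun_complex_mk M.iIndepFun_source M.measurable_source
      (i := Sum.inl (l, k, n, false)) (j := Sum.inl (l, k, n, true))
      (k := Sum.inl (l', k', n', false)) (l := Sum.inl (l', k', n', true)) ?_ ?_ ?_ ?_ <;> grind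
  simpa [Real.coe_toNNReal _ (hlam _ _)] using crossMoment_of_pairwise_indepFun
    (fun i : (Fin L × Fin K) × Fin N => M.hasComplexGaussianLaw_ch i.1.1 i.1.2 i.2) h_indep
    (p, n₁) (q, n₂)

lemma crossMoment_z (n₁ n₂ : Fin N) (s₁ s₂ : ℕ) :
    crossMoment (M.z n₁ s₁) (M.z n₂ s₂) ℙ = if n₁ = n₂ ∧ s₁ = s₂ then 1 else 0 := by
  have h_indep : Pairwise fun i j : Fin N × ℕ => IndepFun (M.z i.1 i.2) (M.z j.1 j.2) ℙ := by
    rintro ⟨n, s⟩ ⟨n', s'⟩ hij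
    refine indepFun_complex_mk M.iIndepFun_source M.measurable_source
      (i := Sum.inr (.inr (.inl (n, s, false)))) (j := Sum.inr (.inr (.inl (n, s, true))))
      (k := Sum.inr (.inr (.inl (n', s', false)))) (l := Sum.inr (.inr (.inl (n', s', true))))
      ?_ ?_ ?_ ?_ <;> grind
  simpa using crossMoment_of_pairwise_indepFun
    (fun i : Fin N × ℕ => M.hasComplexGaussianLaw_z i.1 i.2) h_indep (n₁, s₁) (n₂, s₂)

lemma crossMoment_eta (hv : 0 ≤ σ2 * ξ) (n₁ n₂ : Fin N) (s₁ s₂ : ℕ) :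
    crossMoment (M.eta n₁ s₁) (M.eta n₂ s₂) ℙ =
      if n₁ = n₂ ∧ s₁ = s₂ then ((σ2 * ξ : ℝ) : ℂ) else 0 := by
  have h_indep : Pairwise fun i j : Fin N × ℕ => IndepFun (M.eta i.1 i.2) (M.eta j.1 j.2) ℙ := by
    rintro ⟨n, s⟩ ⟨n', s'⟩ hij
    refine indepFun_complex_mk M.iIndepFun_source M.measurable_source
      (i := Sum.inr (.inr (.inr (n, s, false)))) (j := Sum.inr (.inr (.inr (n, s, true))))
      (k := Sum.inr (.inr (.inr (n', s', false)))) (l := Sum.inr (.inr (.inr (n', s', true))))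
      ?_ ?_ ?_ ?_ <;> grind
  simpa only [Prod.mk.injEq, Real.coe_toNNReal _ hv] using crossMoment_of_pairwise_indepFun
    (fun i : Fin N × ℕ => M.hasComplexGaussianLaw_eta i.1 i.2) h_indep (n₁, s₁) (n₂, s₂)

end GaussianFamilies

section Phasor

/-- The phase-drift factor `e^{iφ_{jn}(s)}`. -/
noncomputable def phasor (n : Fin N) (s : ℕ) (ω : Ω) : ℂ :=
  exp (I * ((M.phase n s ω : ℝ) : ℂ))

variable {M} in
lemma measurable_phasor {A : Set SourceKind} (hA : .phaseDrift ∈ A) (n : Fin N) (s : ℕ) :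
    Measurable[M.sigmaOf A] (M.phasor n s) :=
  measurable_exp.comp ((measurable_ofReal.comp (measurable_phase hA n s)).const_mul I)

lemma norm_phasor (n : Fin N) (s : ℕ) (ω : Ω) : ‖M.phasor n s ω‖ = 1 := by
  rw [phasor, mul_comm, norm_exp_ofReal_mul_I]

lemma phase_sub_phase (n : Fin N) {s t : ℕ} (hst : s ≤ t) (ω : Ω) :
    M.phase n t ω - M.phase n s ω = ∑ u ∈ Finset.Ioc s t, M.dphi n u ω := by
  rw [sub_eq_iff_eq_add', phase, phase]
  exact (Finset.sum_Ioc_consecutive (fun u => M.dphi n u ω) s.zero_le hst).symm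

lemma hasLaw_phase_sub_phase (n : Fin N) {s t : ℕ} (hst : s ≤ t) :
    HasLaw (fun ω => M.phase n t ω - M.phase n s ω)
      (gaussianReal 0 ((t - s : ℕ) * δ.toNNReal)) ℙ := by
  have h_indep : iIndepFun (M.dphi n) ℙ :=
    M.iIndepFun_source.precomp (g := fun u => Sum.inr (.inl (n, u))) fun u v h => by simpa using h
  have h_law (u : ℕ) : HasLaw (M.dphi n u) (gaussianReal 0 δ.toNNReal) ℙ :=
    ⟨(M.meas_dphi n u).aemeasurable, M.law_dphi n u⟩
  simpa [M.phase_sub_phase n hst] using hasLaw_sum_gaussianReal (Finset.Ioc s t) h_law h_indep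

lemma phasor_mul_star_phasor (n : Fin N) (s t : ℕ) (ω : Ω) :
    M.phasor n t ω * star (M.phasor n s ω) =
      exp (I * ((M.phase n t ω - M.phase n s ω : ℝ) : ℂ)) := by
  rw [phasor, phasor, star_def, ← exp_conj, ← exp_add, map_mul, conj_I, conj_ofReal, ofReal_sub,
    mul_sub, neg_mul, sub_eq_add_neg]

lemma crossMoment_phasor_of_le (hδ : 0 ≤ δ) (n : Fin N) {s t : ℕ} (hst : s ≤ t) :
    crossMoment (M.phasor n t) (M.phasor n s) ℙ = Real.exp (-(δ / 2) * ((t : ℝ) - s)) := by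
  simp only [crossMoment, phasor_mul_star_phasor]
  rw [integral_exp_I_mul_of_hasLaw_gaussianReal (M.hasLaw_phase_sub_phase n hst), NNReal.coe_mul,
    NNReal.coe_natCast, Real.coe_toNNReal δ hδ, Nat.cast_sub hst]
  push_cast
  ring_nf

lemma crossMoment_phasor (hδ : 0 ≤ δ) (n : Fin N) (s t : ℕ) :
    crossMoment (M.phasor n s) (M.phasor n t) ℙ = Real.exp (-(δ / 2) * |(s : ℝ) - t|) := by
  rcases le_total s t with hst | hts
  · rw [← star_crossMoment, M.crossMoment_phasor_of_le hδ n hst, star_def, conj_ofReal,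
      abs_sub_comm, abs_of_nonneg (by simpa using hst)]
  · rw [M.crossMoment_phasor_of_le hδ n hts, abs_of_nonneg (by simpa using hts)]

end Phasor

section PilotSums

/-- The superposition `Σ_l Σ_m h_{jlm}^{(n)} x_{lm}(b)` of all pilots, before phase drift. -/
noncomputable def pilotMix (n : Fin N) (b : Fin B) (ω : Ω) : ℂ :=
  ∑ l, ∑ m, M.ch l m n ω * x l m b

/-- The pilot power `Σ_l Σ_m |x_{lm}(b)|² |h_{jlm}^{(n)}|²` that drives the distortion. -/
noncomputable def pilotPower (n : Fin N) (b : Fin B) (ω : Ω) : ℝ :=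
  ∑ l, ∑ m, normSq (x l m b) * normSq (M.ch l m n ω)

/-- The distortion amplitude `κ (Σ_l Σ_m |x_{lm}(b)|² |h_{jlm}^{(n)}|²)^{1/2}`. -/
noncomputable def distortionAmplitude (n : Fin N) (b : Fin B) (ω : Ω) : ℂ :=
  (κ : ℂ) * ((Real.sqrt (M.pilotPower n b ω) : ℝ) : ℂ)

section Measurability

variable {M} {A : Set SourceKind}

lemma measurable_pilotMix (hA : .channel ∈ A) (n : Fin N) (b : Fin B) :
    Measurable[M.sigmaOf A] (M.pilotMix n b) :=
  Finset.measurable_fun_sum _ fun l _ => Finset.measurable_fun_sum _ fun m _ =>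
    (measurable_ch hA l m n).mul_const _

lemma measurable_distortionAmplitude (hA : .channel ∈ A) (n : Fin N) (b : Fin B) :
    Measurable[M.sigmaOf A] (M.distortionAmplitude n b) := by
  have measurable_pilotPower : Measurable[M.sigmaOf A] (M.pilotPower n b) :=
    Finset.measurable_fun_sum _ fun l _ => Finset.measurable_fun_sum _ fun m _ =>
      (continuous_normSq.measurable.comp (measurable_ch hA l m n)).const_mul _
  exact (measurable_ofReal.comp measurable_pilotPower.sqrt).const_mul _

end Measurability

lemma memLp_pilotMix (n : Fin N) (b : Fin B) : MemLp (M.pilotMix n b) 2 ℙ :=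
  memLp_finsetSum _ fun l _ => memLp_finsetSum _ fun m _ =>
    (M.hasComplexGaussianLaw_ch l m n).memLp_two.mul_const _

lemma crossMoment_pilotMix (hlam : ∀ l k, 0 ≤ lam l k) (n₁ n₂ : Fin N) (b₁ b₂ : Fin B) :
    crossMoment (M.pilotMix n₁ b₁) (M.pilotMix n₂ b₂) ℙ =
      if n₁ = n₂ then ∑ l, ∑ m, (lam l m : ℂ) * (x l m b₁ * star (x l m b₂)) else 0 := by
  have pilotMix_eq (n : Fin N) (b : Fin B) : M.pilotMix n b = fun ω =>
      ∑ p : Fin L × Fin K, M.ch p.1 p.2 n ω * x p.1 p.2 b := by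
    ext ω
    rw [Fintype.sum_prod_type]
    rfl
  rw [pilotMix_eq, pilotMix_eq, crossMoment_sum_mul _ _
    (fun p _ => (M.hasComplexGaussianLaw_ch p.1 p.2 n₁).memLp_two)
    (fun p _ => (M.hasComplexGaussianLaw_ch p.1 p.2 n₂).memLp_two)]
  simp only [M.crossMoment_ch hlam]
  split_ifs with hn
  · simp only [hn, and_true, ite_mul, zero_mul, Finset.sum_ite_eq, Finset.mem_univ, if_true,
      Fintype.sum_prod_type]
  · simp [hn]

lemma integrable_normSq_ch (l : Fin L) (k : Fin K) (n : Fin N) :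
    Integrable (fun ω => normSq (M.ch l k n ω)) ℙ := by
  simpa only [normSq_eq_norm_sq] using
    (M.hasComplexGaussianLaw_ch l k n).memLp_two.integrable_norm_pow two_ne_zero

lemma integrable_pilotPower (n : Fin N) (b : Fin B) : Integrable (M.pilotPower n b) ℙ :=
  integrable_finsetSum _ fun l _ => integrable_finsetSum _ fun m _ =>
    (M.integrable_normSq_ch l m n).const_mul _

lemma integral_pilotPower (hlam : ∀ l k, 0 ≤ lam l k) (n : Fin N) (b : Fin B) :
    ∫ ω, M.pilotPower n b ω = ∑ l, ∑ m, lam l m * normSq (x l m b) := by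
  have integral_term (l : Fin L) (m : Fin K) :
      ∫ ω, normSq (x l m b) * normSq (M.ch l m n ω) = lam l m * normSq (x l m b) := by
    rw [integral_const_mul, mul_comm]
    simp only [normSq_eq_norm_sq (M.ch l m n _),
      (M.hasComplexGaussianLaw_ch l m n).integral_norm_sq, Real.coe_toNNReal _ (hlam l m)]
  have integrable_term (l : Fin L) (m : Fin K) :=
    (M.integrable_normSq_ch l m n).const_mul (normSq (x l m b))
  unfold pilotPower
  rw [integral_finsetSum _ fun l _ => integrable_finsetSum _ fun m _ => integrable_term l m]
  refine Finset.sum_congr rfl fun l _ => ?_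
  rw [integral_finsetSum _ fun m _ => integrable_term l m]
  exact Finset.sum_congr rfl fun m _ => integral_term l m

lemma norm_distortionAmplitude_sq (n : Fin N) (b : Fin B) (ω : Ω) :
    ‖M.distortionAmplitude n b ω‖ ^ 2 = κ ^ 2 * M.pilotPower n b ω := by
  have pilotPower_nonneg : 0 ≤ M.pilotPower n b ω :=
    Finset.sum_nonneg fun l _ => Finset.sum_nonneg fun m _ =>
      mul_nonneg (normSq_nonneg _) (normSq_nonneg _)
  rw [distortionAmplitude, norm_mul, norm_real, norm_real, mul_pow, Real.norm_eq_abs,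
    Real.norm_eq_abs, sq_abs, sq_abs, Real.sq_sqrt pilotPower_nonneg]

lemma memLp_distortionAmplitude (n : Fin N) (b : Fin B) :
    MemLp (M.distortionAmplitude n b) 2 ℙ := by
  rw [memLp_two_iff_integrable_sq_norm (aestronglyMeasurable_of_sigmaOf
    (measurable_distortionAmplitude (Set.mem_univ _) n b))]
  simpa only [norm_distortionAmplitude_sq] using (M.integrable_pilotPower n b).const_mul (κ ^ 2)

lemma crossMoment_distortionAmplitude_self (hlam : ∀ l k, 0 ≤ lam l k) (n : Fin N) (b : Fin B) :
    crossMoment (M.distortionAmplitude n b) (M.distortionAmplitude n b) ℙ =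
      (κ : ℂ) ^ 2 * ∑ l, ∑ m, (lam l m : ℂ) * normSq (x l m b) := by
  simp only [crossMoment_self, norm_distortionAmplitude_sq, integral_const_mul,
    M.integral_pilotPower hlam]
  push_cast
  rfl

end PilotSums

section ReceivedSignal

/-- The useful part `e^{iφ_{jn}(b)} Σ_l Σ_m h_{jlm}^{(n)} x_{lm}(b)` of the received pilot signal;
as in `MIMOModel.y`, the index `b` is pilot time `b + 1`. -/
noncomputable def signal (n : Fin N) (b : Fin B) : Ω → ℂ :=
  M.phasor n (b + 1) * M.pilotMix n b

/-- The distortion part of the received pilot signal at pilot time `b + 1`. -/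
noncomputable def distortion (n : Fin N) (b : Fin B) : Ω → ℂ :=
  M.distortionAmplitude n b * M.z n (b + 1)

lemma y_eq_signal_add_distortion_add_eta (n : Fin N) (b : Fin B) :
    M.y n b = M.signal n b + M.distortion n b + M.eta n (b + 1) := rfl

section Measurability

variable {M} {A : Set SourceKind}

lemma measurable_signal (hp : .phaseDrift ∈ A) (hc : .channel ∈ A) (n : Fin N) (b : Fin B) :
    Measurable[M.sigmaOf A] (M.signal n b) :=
  (measurable_phasor hp n _).mul (measurable_pilotMix hc n b)

lemma measurable_distortion (hc : .channel ∈ A) (hd : .distortion ∈ A) (n : Fin N) (b : Fin B) :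
    Measurable[M.sigmaOf A] (M.distortion n b) :=
  (measurable_distortionAmplitude hc n b).mul (measurable_z hd n _)

end Measurability

lemma memLp_signal (n : Fin N) (b : Fin B) : MemLp (M.signal n b) 2 ℙ := by
  refine (M.memLp_pilotMix n b).of_le (aestronglyMeasurable_of_sigmaOf
    (measurable_signal (Set.mem_univ _) (Set.mem_univ _) n b)) (.of_forall fun ω => ?_)
  rw [signal, Pi.mul_apply, norm_mul, norm_phasor, one_mul]

lemma memLp_distortion (n : Fin N) (b : Fin B) : MemLp (M.distortion n b) 2 ℙ :=
  memLp_two_mul_of_indepFun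
    (indepFun_of_disjoint (A := {.channel}) (A' := {.distortion}) (by simp)
      (measurable_distortionAmplitude (by simp) n b) (measurable_z (by simp) n _))
    (M.memLp_distortionAmplitude n b) (M.hasComplexGaussianLaw_z n _).memLp_two

lemma crossMoment_distortion_signal (n₁ n₂ : Fin N) (b₁ b₂ : Fin B) :
    crossMoment (M.distortion n₁ b₁) (M.signal n₂ b₂) ℙ = 0 := by
  have h_indep : IndepFun (M.z n₁ (b₁ + 1))
      (fun ω => M.distortionAmplitude n₁ b₁ ω * star (M.signal n₂ b₂ ω)) ℙ :=
    indepFun_of_disjoint (A := {.distortion}) disjoint_compl_right (measurable_z (by simp) n₁ _)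
      (measurable_mul_star (measurable_distortionAmplitude (by simp) n₁ b₁)
        (measurable_signal (by simp) (by simp) n₂ b₂))
  exact crossMoment_mul_eq_zero_of_indepFun h_indep (M.memLp_distortionAmplitude n₁ b₁).1
    (M.hasComplexGaussianLaw_z n₁ _).memLp_two.1 (M.memLp_signal n₂ b₂).1
    (M.hasComplexGaussianLaw_z n₁ _).integral_eq_zero

lemma crossMoment_eta_signal_add_distortion (n₁ n₂ : Fin N) (s : ℕ) (b : Fin B) :
    crossMoment (M.eta n₁ s) (M.signal n₂ b + M.distortion n₂ b) ℙ = 0 := by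
  have h_indep : IndepFun (M.eta n₁ s) (M.signal n₂ b + M.distortion n₂ b) ℙ :=
    indepFun_of_disjoint (A := {.noise}) disjoint_compl_right (measurable_eta (by simp) n₁ s)
      ((measurable_signal (by simp) (by simp) n₂ b).add
        (measurable_distortion (by simp) (by simp) n₂ b))
  exact crossMoment_eq_zero_of_indepFun h_indep (M.hasComplexGaussianLaw_eta n₁ s).memLp_two.1
    ((M.memLp_signal n₂ b).add (M.memLp_distortion n₂ b)).1
    (M.hasComplexGaussianLaw_eta n₁ s).integral_eq_zero

lemma crossMoment_signal (hlam : ∀ l k, 0 ≤ lam l k) (hδ : 0 ≤ δ) (n₁ n₂ : Fin N)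
    (b₁ b₂ : Fin B) :
    crossMoment (M.signal n₁ b₁) (M.signal n₂ b₂) ℙ =
      if n₁ = n₂ then Real.exp (-(δ / 2) * |((b₁ : ℕ) : ℝ) - ((b₂ : ℕ) : ℝ)|) *
        ∑ l, ∑ m, (lam l m : ℂ) * (x l m b₁ * star (x l m b₂)) else 0 := by
  have h_indep : IndepFun
      (fun ω => M.phasor n₁ (b₁ + 1) ω * star (M.phasor n₂ (b₂ + 1) ω))
      (fun ω => M.pilotMix n₁ b₁ ω * star (M.pilotMix n₂ b₂ ω)) ℙ :=
    indepFun_of_disjoint (A := {.phaseDrift}) (A' := {.channel}) (by simp)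
      (measurable_mul_star (measurable_phasor (by simp) n₁ _) (measurable_phasor (by simp) n₂ _))
      (measurable_mul_star (measurable_pilotMix (by simp) n₁ b₁)
        (measurable_pilotMix (by simp) n₂ b₂))
  have phasor_meas (n : Fin N) (s : ℕ) : AEStronglyMeasurable (M.phasor n s) ℙ :=
    aestronglyMeasurable_of_sigmaOf (measurable_phasor (Set.mem_univ _) n s)
  rw [signal, signal, crossMoment_mul_mul h_indep (phasor_meas n₁ _) (phasor_meas n₂ _)
    (M.memLp_pilotMix n₁ b₁).1 (M.memLp_pilotMix n₂ b₂).1, M.crossMoment_pilotMix hlam]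
  split_ifs with hn
  · rw [hn, M.crossMoment_phasor hδ, Nat.cast_add, Nat.cast_add, add_sub_add_right_eq_sub]
  · rw [mul_zero]

lemma crossMoment_distortion (hlam : ∀ l k, 0 ≤ lam l k) (n₁ n₂ : Fin N) (b₁ b₂ : Fin B) :
    crossMoment (M.distortion n₁ b₁) (M.distortion n₂ b₂) ℙ =
      if n₁ = n₂ ∧ b₁ = b₂ then
        (κ : ℂ) ^ 2 * ∑ l, ∑ m, (lam l m : ℂ) * normSq (x l m b₁) else 0 := by
  have h_indep : IndepFun
      (fun ω => M.distortionAmplitude n₁ b₁ ω * star (M.distortionAmplitude n₂ b₂ ω))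
      (fun ω => M.z n₁ (b₁ + 1) ω * star (M.z n₂ (b₂ + 1) ω)) ℙ :=
    indepFun_of_disjoint (A := {.channel}) (A' := {.distortion}) (by simp)
      (measurable_mul_star (measurable_distortionAmplitude (by simp) n₁ b₁)
        (measurable_distortionAmplitude (by simp) n₂ b₂))
      (measurable_mul_star (measurable_z (by simp) n₁ _) (measurable_z (by simp) n₂ _))
  rw [distortion, distortion, crossMoment_mul_mul h_indep (M.memLp_distortionAmplitude n₁ b₁).1
    (M.memLp_distortionAmplitude n₂ b₂).1 (M.hasComplexGaussianLaw_z n₁ _).memLp_two.1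
    (M.hasComplexGaussianLaw_z n₂ _).memLp_two.1, M.crossMoment_z]
  simp only [Nat.add_right_cancel_iff, Fin.val_inj]
  split_ifs with h
  · rw [← h.1, ← h.2, M.crossMoment_distortionAmplitude_self hlam, mul_one]
  · rw [mul_zero]

lemma crossMoment_y (hlam : ∀ l k, 0 ≤ lam l k) (hv : 0 ≤ σ2 * ξ) (hδ : 0 ≤ δ) (n₁ n₂ : Fin N)
    (b₁ b₂ : Fin B) :
    crossMoment (M.y n₁ b₁) (M.y n₂ b₂) ℙ =
      PsiMat lam σ2 ξ κ δ x b₁ b₂ * (1 : Matrix (Fin N) (Fin N) ℂ) n₁ n₂ := by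
  have memLp_eta (n : Fin N) (s : ℕ) := (M.hasComplexGaussianLaw_eta n s).memLp_two
  rw [y_eq_signal_add_distortion_add_eta, y_eq_signal_add_distortion_add_eta,
    crossMoment_add_add_of_orthogonal ((M.memLp_signal n₁ b₁).add (M.memLp_distortion n₁ b₁))
      (memLp_eta n₁ _) ((M.memLp_signal n₂ b₂).add (M.memLp_distortion n₂ b₂)) (memLp_eta n₂ _)
      (M.crossMoment_eta_signal_add_distortion n₁ n₂ _ b₂)
      (M.crossMoment_eta_signal_add_distortion n₂ n₁ _ b₁),
    crossMoment_add_add_of_orthogonal (M.memLp_signal n₁ b₁) (M.memLp_distortion n₁ b₁)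
      (M.memLp_signal n₂ b₂) (M.memLp_distortion n₂ b₂)
      (M.crossMoment_distortion_signal n₁ n₂ b₁ b₂) (M.crossMoment_distortion_signal n₂ n₁ b₂ b₁),
    M.crossMoment_signal hlam hδ, M.crossMoment_distortion hlam, M.crossMoment_eta hv,
    PsiMat_apply, one_apply]
  simp only [Nat.add_right_cancel_iff, Fin.val_inj]
  by_cases hn : n₁ = n₂ <;> simp [hn]

end ReceivedSignal

end MIMOModel

theorem pilot_signal_covariance_general {Ω : Type*} [MeasureSpace Ω] {N B L K : ℕ}
    {lam : Fin L → Fin K → ℝ} {σ2 ξ κ δ : ℝ} {x : Fin L → Fin K → Fin B → ℂ}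
    (M : MIMOModel Ω N B L K lam σ2 ξ κ δ x)
    (hlam : ∀ l k, 0 ≤ lam l k) (hv : 0 ≤ σ2 * ξ) (hδ : 0 ≤ δ) :
    ((Matrix.of fun p q : Fin B × Fin N => ∫ ω, M.y p.2 p.1 ω * star (M.y q.2 q.1 ω))
        = PsiMat lam σ2 ξ κ δ x ⊗ₖ (1 : Matrix (Fin N) (Fin N) ℂ)) ∧
    ∀ b₁ b₂ : Fin B,
      (Matrix.of fun n₁ n₂ : Fin N => ∫ ω, M.y n₁ b₁ ω * star (M.y n₂ b₂ ω))
        = PsiMat lam σ2 ξ κ δ x b₁ b₂ • (1 : Matrix (Fin N) (Fin N) ℂ) :=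
  ⟨ext fun p q => M.crossMoment_y hlam hv hδ p.2 q.2 p.1 q.1,
    fun b₁ b₂ => ext fun n₁ n₂ => M.crossMoment_y hlam hv hδ n₁ n₂ b₁ b₂⟩

/-- **Covariance of the stacked received pilot signal (Theorem 1, first ingredient).**
`E[ψ_j ψ_jᴴ] = Ψ_j ⊗ I_N`; equivalently, each `N × N` block satisfies
`E[y_j(b₁) y_j(b₂)ᴴ] = [Ψ_j]_{b₁,b₂} · I_N`. -/
theorem pilot_signal_covariance
    {Ω : Type*} [MeasureSpace Ω] [IsProbabilityMeasure (ℙ : Measure Ω)]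
    {N B L K : ℕ} {lam : Fin L → Fin K → ℝ} {σ2 ξ κ δ : ℝ}
    {x : Fin L → Fin K → Fin B → ℂ}
    (M : MIMOModel Ω N B L K lam σ2 ξ κ δ x)
    (hlam : ∀ l k, 0 < lam l k) (hσ2 : 0 < σ2) (hξ : 1 ≤ ξ) (hκ : 0 ≤ κ) (hδ : 0 ≤ δ)
    :
    ((Matrix.of fun p q : Fin B × Fin N => ∫ ω, M.y p.2 p.1 ω * star (M.y q.2 q.1 ω))
        = PsiMat lam σ2 ξ κ δ x ⊗ₖ (1 : Matrix (Fin N) (Fin N) ℂ)) ∧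
    ∀ b₁ b₂ : Fin B,
      (Matrix.of fun n₁ n₂ : Fin N => ∫ ω, M.y n₁ b₁ ω * star (M.y n₂ b₂ ω))
        = PsiMat lam σ2 ξ κ δ x b₁ b₂ • (1 : Matrix (Fin N) (Fin N) ℂ) :=
  pilot_signal_covariance_general M (fun l k => (hlam l k).le)
    (mul_nonneg hσ2.le (zero_le_one.trans hξ)) hδ
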